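/- Let h > 0 and let w be a complex number with Re w > 0. Then ∫₀^∞ u·J₀(h·u)/(u² + w²) du = K₀(h·w), where K₀(z) = ∫₀^∞ exp(−z cosh t) dt for Re z > 0. (This is the Hankel–Nicholson formula with ν = 0, μ = 0, used to evaluate the two-dimensional SSRF covariance for all η1 > −2, η1 ≠ 2.) -/

import Mathlib

open MeasureTheory Real Filter

/-- Bessel function of the first kind of order zero,
`J₀(x) = (1/π) ∫₀^π cos (x sin θ) dθ`. -/
noncomputable def besselJ0 (x : ℝ) : ℝ :=
  (1 / Real.pi) * ∫ θ in (0:ℝ)..Real.pi, Real.cos (x * Real.sin θ)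

/-- Modified Bessel function of the second kind of order zero of a complex
argument with `Re z > 0`, `K₀(z) = ∫₀^∞ exp (−z cosh t) dt`. -/
noncomputable def besselK0C (w : ℂ) : ℂ :=
  ∫ t in Set.Ioi (0:ℝ), Complex.exp (-w * (Real.cosh t : ℂ))

/-- Bessel function of the first kind of order one. -/
noncomputable def besselJ1 (x : ℝ) : ℝ :=
  (1 / Real.pi) * ∫ θ in (0:ℝ)..Real.pi, Real.sin (x * Real.sin θ) * Real.sin θ

lemma continuous_besselJ0 : Continuous besselJ0 := by
  unfold besselJ0
  refine continuous_const.mul ?_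
  apply intervalIntegral.continuous_parametric_intervalIntegral_of_continuous'
  fun_prop

lemma abs_besselJ0_le_one (x : ℝ) : |besselJ0 x| ≤ 1 := by
  have key := intervalIntegral.norm_integral_le_of_norm_le_const (a := 0) (b := π) (C := 1)
    (f := fun θ => Real.cos (x * Real.sin θ)) (fun θ _ => Real.abs_cos_le_one _)
  rw [Real.norm_eq_abs, sub_zero, abs_of_pos pi_pos, one_mul] at key
  rw [besselJ0, abs_mul, abs_of_pos (by positivity), one_div, inv_mul_le_one₀ pi_pos]
  exact key

lemma abs_besselJ1_le_one (x : ℝ) : |besselJ1 x| ≤ 1 := by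
  have key := intervalIntegral.norm_integral_le_of_norm_le_const (a := 0) (b := π) (C := 1)
    (f := fun θ => Real.sin (x * Real.sin θ) * Real.sin θ) (fun θ _ => by
      rw [norm_mul]
      exact mul_le_one₀ (Real.abs_sin_le_one _) (norm_nonneg _) (Real.abs_sin_le_one _))
  rw [Real.norm_eq_abs, sub_zero, abs_of_pos pi_pos, one_mul] at key
  rw [besselJ1, abs_mul, abs_of_pos (by positivity), one_div, inv_mul_le_one₀ pi_pos]
  exact key

lemma hasDerivAt_besselJ1 (x : ℝ) :
    HasDerivAt besselJ1
      ((1 / π) * ∫ θ in (0:ℝ)..π, Real.cos (x * Real.sin θ) * Real.sin θ * Real.sin θ) x := by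
  unfold besselJ1
  refine HasDerivAt.const_mul _ ?_
  refine (intervalIntegral.hasDerivAt_integral_of_dominated_loc_of_deriv_le
    (F := fun x θ => Real.sin (x * Real.sin θ) * Real.sin θ)
    (F' := fun x θ => Real.cos (x * Real.sin θ) * Real.sin θ * Real.sin θ)
    (bound := fun _ => 1) Filter.univ_mem ?_ ?_ ?_ ?_ ?_ ?_).2
  · exact .of_forall fun x => (by fun_prop : Continuous _).aestronglyMeasurable
  · exact (by fun_prop : Continuous _).intervalIntegrable _ _
  · exact (by fun_prop : Continuous _).aestronglyMeasurable
  · refine .of_forall fun θ _ y _ => ?_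
    rw [norm_mul, norm_mul]
    exact mul_le_one₀ (mul_le_one₀ (Real.abs_cos_le_one _) (norm_nonneg _)
      (Real.abs_sin_le_one _)) (norm_nonneg _) (Real.abs_sin_le_one _)
  · exact intervalIntegrable_const
  · refine .of_forall fun θ _ y _ => ?_
    have := (((hasDerivAt_id y).mul_const (Real.sin θ)).sin).mul_const (Real.sin θ)
    simpa using this

/-- `J₁(x) = (x/π) ∫₀^π cos (x sin θ) cos² θ dθ`. -/
lemma besselJ1_eq_integral_cos (x : ℝ) :
    besselJ1 x =
      (1 / π) * (x * ∫ θ in (0:ℝ)..π, Real.cos (x * Real.sin θ) * Real.cos θ * Real.cos θ) := by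
  have key := intervalIntegral.integral_mul_deriv_eq_deriv_mul (a := 0) (b := π)
    (u := fun θ => Real.sin (x * Real.sin θ)) (v := fun θ => - Real.cos θ)
    (u' := fun θ => Real.cos (x * Real.sin θ) * (x * Real.cos θ)) (v' := fun θ => Real.sin θ)
    (fun θ _ => ((Real.hasDerivAt_sin θ).const_mul x).sin)
    (fun θ _ => by simpa using! (Real.hasDerivAt_cos θ).neg)
    ((by fun_prop : Continuous _).intervalIntegrable _ _)
    ((by fun_prop : Continuous _).intervalIntegrable _ _)
  rw [besselJ1, key, ← intervalIntegral.integral_const_mul]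
  simp only [Real.sin_pi, Real.sin_zero, mul_zero, zero_mul, sub_self, zero_sub,
    ← intervalIntegral.integral_neg]
  congr 2
  ext θ
  ring

lemma hasDerivAt_mul_besselJ1 (x : ℝ) :
    HasDerivAt (fun y => y * besselJ1 y) (x * besselJ0 x) x := by
  have key := (hasDerivAt_id x).mul (hasDerivAt_besselJ1 x)
  convert! key using 1
  have hint : ∀ f : ℝ → ℝ, Continuous f → IntervalIntegrable f volume 0 π :=
    fun f hf => hf.intervalIntegrable _ _
  have hsum : (∫ θ in (0:ℝ)..π, Real.cos (x * Real.sin θ)) =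
      (∫ θ in (0:ℝ)..π, Real.cos (x * Real.sin θ) * Real.cos θ * Real.cos θ) +
        ∫ θ in (0:ℝ)..π, Real.cos (x * Real.sin θ) * Real.sin θ * Real.sin θ := by
    rw [← intervalIntegral.integral_add (hint _ (by fun_prop)) (hint _ (by fun_prop))]
    congr 1
    ext θ
    linear_combination -Real.cos (x * Real.sin θ) * Real.sin_sq_add_cos_sq θ
  rw [besselJ1_eq_integral_cos, besselJ0, hsum]
  simp only [id]
  ring

lemma hasDerivAt_mul_besselJ1_mul {h : ℝ} (hh : h ≠ 0) (u : ℝ) :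
    HasDerivAt (fun y => y * besselJ1 (h * y) / h) (u * besselJ0 (h * u)) u := by
  have key := ((hasDerivAt_mul_besselJ1 (h * u)).comp u
    ((hasDerivAt_id u).const_mul h)).div_const (h ^ 2)
  convert! key using 1
  · ext y
    simp only [Function.comp]
    field_simp
  · field_simp

lemma integral_cexp_mul_sin (x : ℝ) :
    ∫ θ in (-π)..π, Complex.exp (Complex.I * (x * Real.sin θ : ℝ)) = 2 * π * besselJ0 x := by
  have hint : ∀ a b : ℝ, IntervalIntegrable
      (fun θ : ℝ => Complex.exp (Complex.I * (x * Real.sin θ : ℝ))) volume a b :=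
    fun a b => (by fun_prop : Continuous _).intervalIntegrable _ _
  have hneg : ∫ θ in (-π)..0, Complex.exp (Complex.I * (x * Real.sin θ : ℝ)) =
      ∫ θ in (0:ℝ)..π, Complex.exp (Complex.I * (x * Real.sin (-θ) : ℝ)) := by
    rw [intervalIntegral.integral_comp_neg
      (fun θ : ℝ => Complex.exp (Complex.I * (x * Real.sin θ : ℝ))), neg_zero]
  rw [← intervalIntegral.integral_add_adjacent_intervals (hint _ 0) (hint 0 _), hneg,
    ← intervalIntegral.integral_add ((by fun_prop : Continuous _).intervalIntegrable _ _)
      (hint _ _), besselJ0]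
  have : ∀ θ : ℝ, Complex.exp (Complex.I * (x * Real.sin (-θ) : ℝ)) +
      Complex.exp (Complex.I * (x * Real.sin θ : ℝ)) =
      2 * ((Real.cos (x * Real.sin θ) : ℝ) : ℂ) := by
    intro θ
    rw [Complex.ofReal_cos, Complex.two_cos, add_comm, Real.sin_neg]
    congr 2
    · ring
    · push_cast
      ring
  simp only [this]
  rw [intervalIntegral.integral_const_mul, intervalIntegral.integral_ofReal]
  push_cast
  field_simp

/-- The Hankel transform of order zero of a Gaussian. -/
lemma integral_mul_besselJ0_mul_cexp_neg_mul_sq (h : ℝ) {b : ℂ} (hb : 0 < b.re) :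
    ∫ u in Set.Ioi (0:ℝ), ((u * besselJ0 (h * u) : ℝ) : ℂ) * Complex.exp (-b * (u : ℂ) ^ 2) =
      1 / (2 * b) * Complex.exp (-(h : ℂ) ^ 2 / (4 * b)) := by
  have hb0 : b ≠ 0 := by
    rintro rfl
    simp at hb
  have gauss := GaussianFourier.integral_cexp_neg_mul_sq_norm_add hb (h * Complex.I) Complex.I
  rw [← Complex.integral_comp_polarCoord_symm] at gauss
  have hrw : ∀ p ∈ polarCoord.target,
      p.1 • Complex.exp (-b * ‖Complex.polarCoord.symm p‖ ^ 2 +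
        (h * Complex.I) * (inner ℝ Complex.I (Complex.polarCoord.symm p) : ℝ)) =
      (p.1 * Complex.exp (-b * (p.1 : ℂ) ^ 2)) *
        Complex.exp (Complex.I * ((h * p.1) * Real.sin p.2 : ℝ)) := by
    rintro ⟨r, θ⟩ hp
    rw [Complex.norm_polarCoord_symm, Complex.real_smul, Complex.exp_add, ← mul_assoc]
    have : inner ℝ Complex.I (Complex.polarCoord.symm (r, θ)) = r * Real.sin θ := by
      simp [Complex.polarCoord_symm_apply, Complex.inner, Complex.sin_ofReal_re]
    rw [this, ← Complex.ofReal_pow, sq_abs]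
    push_cast
    congr 2
    ring
  rw [setIntegral_congr_fun polarCoord.open_target.measurableSet hrw, polarCoord_target,
    Measure.volume_eq_prod, setIntegral_prod] at gauss
  · have hin : ∀ r : ℝ, ∫ θ in Set.Ioo (-π) π, (r * Complex.exp (-b * (r : ℂ) ^ 2)) *
        Complex.exp (Complex.I * ((h * r) * Real.sin θ : ℝ)) =
        (2 * π) * (((r * besselJ0 (h * r) : ℝ) : ℂ) * Complex.exp (-b * (r : ℂ) ^ 2)) := by
      intro r
      rw [integral_const_mul, ← integral_Ioc_eq_integral_Ioo,
        ← intervalIntegral.integral_of_le (by linarith [pi_pos]), integral_cexp_mul_sin]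
      push_cast
      ring
    simp only [hin] at gauss
    rw [integral_const_mul] at gauss
    have hpi : (π : ℂ) ≠ 0 := by exact_mod_cast pi_ne_zero
    simp only [Complex.finrank_real_complex, Nat.cast_ofNat, div_self (two_ne_zero' ℂ),
      Complex.cpow_one, Complex.norm_I, mul_pow, Complex.I_sq] at gauss
    apply mul_left_cancel₀ (mul_ne_zero two_ne_zero hpi)
    rw [gauss]
    push_cast
    field_simp
  · rw [IntegrableOn, ← Measure.prod_restrict]
    have hf : Integrable (fun r : ℝ => ‖(r : ℂ) * Complex.exp (-b * (r : ℂ) ^ 2)‖)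
        (volume.restrict (Set.Ioi 0)) := (integrable_mul_cexp_neg_mul_sq hb).norm.integrableOn
    have hg : Integrable (fun _ : ℝ => (1 : ℝ)) (volume.restrict (Set.Ioo (-π) π)) :=
      integrable_const _
    refine (hf.mul_prod hg).mono' (by fun_prop : Continuous _).aestronglyMeasurable
      (.of_forall fun p => ?_)
    rw [norm_mul, mul_comm Complex.I, Complex.norm_exp_ofReal_mul_I]

lemma continuous_besselJ1 : Continuous besselJ1 := by
  unfold besselJ1
  refine continuous_const.mul ?_
  apply intervalIntegral.continuous_parametric_intervalIntegral_of_continuous'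
  fun_prop

lemma continuous_mul_besselJ1_mul (h : ℝ) : Continuous fun u => u * besselJ1 (h * u) / h :=
  (continuous_id.mul (continuous_besselJ1.comp (continuous_const.mul continuous_id))).div_const h

lemma abs_mul_besselJ1_mul_le {h : ℝ} (hh : 0 < h) (u : ℝ) :
    |u * besselJ1 (h * u) / h| ≤ |u| / h := by
  rw [abs_div, abs_mul, abs_of_pos hh]
  gcongr
  exact mul_le_of_le_one_right (abs_nonneg _) (abs_besselJ1_le_one _)

lemma integral_mul_besselJ1_mul_cexp_neg_mul_sq {h : ℝ} (hh : 0 < h) {b : ℂ} (hb : 0 < b.re) :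
    ∫ u in Set.Ioi (0:ℝ), ((u * besselJ1 (h * u) / h : ℝ) : ℂ) *
        (u * Complex.exp (-b * (u : ℂ) ^ 2)) =
      1 / (4 * b ^ 2) * Complex.exp (-(h : ℂ) ^ 2 / (4 * b)) := by
  have hb0 : b ≠ 0 := by
    rintro rfl
    simp at hb
  have hexp : ∀ u : ℝ, ‖Complex.exp (-b * (u : ℂ) ^ 2)‖ = Real.exp (-b.re * u ^ 2) :=
    norm_cexp_neg_mul_sq b
  have hv : ∀ u : ℝ, HasDerivAt (fun u : ℝ => -(1 / (2 * b)) * Complex.exp (-b * (u : ℂ) ^ 2))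
      (u * Complex.exp (-b * (u : ℂ) ^ 2)) u := by
    intro u
    have h1 : HasDerivAt (fun z : ℂ => -(1 / (2 * b)) * Complex.exp (-b * z ^ 2))
        (-(1 / (2 * b)) * (Complex.exp (-b * (u : ℂ) ^ 2) * (-b * (2 * (u : ℂ))))) (u : ℂ) := by
      have := (((hasDerivAt_pow 2 (u : ℂ)).const_mul (-b)).cexp).const_mul (-(1 / (2 * b)))
      simpa using this
    convert! h1.comp_ofReal using 1
    field_simp
  have hcont := continuous_mul_besselJ1_mul h
  have hcont0 : Continuous fun u => besselJ0 (h * u) :=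
    continuous_besselJ0.comp (continuous_const.mul continuous_id)
  have hz : Tendsto (fun u : ℝ => ((u * besselJ1 (h * u) / h : ℝ) : ℂ) *
      (-(1 / (2 * b)) * Complex.exp (-b * (u : ℂ) ^ 2))) atTop (nhds 0) := by
    have h1 : Tendsto (fun u : ℝ => u ^ (1 : ℝ) * Real.exp (-b.re * u ^ 2)) atTop (nhds 0) := by
      refine (rpow_mul_exp_neg_mul_sq_isLittleO_exp_neg hb 1).trans_tendsto ?_
      exact Real.tendsto_exp_atBot.comp (tendsto_id.const_mul_atTop_of_neg (by norm_num))
    have h2 := h1.const_mul (1 / h * ‖(1 / (2 * b))‖)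
    rw [mul_zero] at h2
    refine squeeze_zero_norm' ?_ h2
    filter_upwards [eventually_ge_atTop 0] with u hu
    have h3 := abs_mul_besselJ1_mul_le hh u
    rw [abs_of_nonneg hu] at h3
    rw [norm_mul, norm_mul, norm_neg, hexp, Complex.norm_real, Real.norm_eq_abs, rpow_one]
    calc _ ≤ u / h * (‖(1 / (2 * b))‖ * Real.exp (-b.re * u ^ 2)) := by gcongr
      _ = _ := by ring
  have key := integral_Ioi_mul_deriv_eq_deriv_mul (a := 0) (a' := 0) (b' := 0)
    (u := fun u : ℝ => ((u * besselJ1 (h * u) / h : ℝ) : ℂ))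
    (u' := fun u : ℝ => ((u * besselJ0 (h * u) : ℝ) : ℂ))
    (fun u _ => (hasDerivAt_mul_besselJ1_mul hh.ne' u).ofReal_comp) (fun u _ => hv u)
    ?_ ?_ ?_ hz
  · rw [key]
    have : ∀ u : ℝ, ((u * besselJ0 (h * u) : ℝ) : ℂ) *
        (-(1 / (2 * b)) * Complex.exp (-b * (u : ℂ) ^ 2)) = -(1 / (2 * b)) *
        (((u * besselJ0 (h * u) : ℝ) : ℂ) * Complex.exp (-b * (u : ℂ) ^ 2)) := fun u => by ring
    simp only [this]
    rw [integral_const_mul, integral_mul_besselJ0_mul_cexp_neg_mul_sq h hb]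
    ring
  · have hint := ((integrable_rpow_mul_exp_neg_mul_sq hb (s := 2) (by norm_num)).const_mul
      (1 / h)).integrableOn (s := Set.Ioi 0)
    refine Integrable.mono' hint (by fun_prop : Continuous _).aestronglyMeasurable
      (.of_forall fun u => ?_)
    simp only [Pi.mul_apply]
    have h3 := abs_mul_besselJ1_mul_le hh u
    rw [norm_mul, norm_mul, hexp, Complex.norm_real, Real.norm_eq_abs, Complex.norm_real,
      Real.norm_eq_abs, rpow_two]
    calc _ ≤ |u| / h * (|u| * Real.exp (-b.re * u ^ 2)) := by gcongr
      _ = 1 / h * (|u| ^ 2 * Real.exp (-b.re * u ^ 2)) := by ring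
      _ = _ := by rw [sq_abs]
  · have hint := ((integrable_mul_cexp_neg_mul_sq hb).norm.const_mul
      ‖(1 / (2 * b))‖).integrableOn (s := Set.Ioi 0)
    refine Integrable.mono' hint (by fun_prop : Continuous _).aestronglyMeasurable
      (.of_forall fun u => ?_)
    simp only [Pi.mul_apply]
    rw [norm_mul, norm_mul, norm_neg, norm_mul, Complex.norm_real, Complex.norm_real, norm_mul]
    calc _ ≤ ‖u‖ * 1 * (‖1 / (2 * b)‖ * ‖Complex.exp (-b * (u : ℂ) ^ 2)‖) := by
          gcongr
          exact abs_besselJ0_le_one _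
      _ = _ := by ring
  · refine tendsto_nhdsWithin_of_tendsto_nhds ?_
    refine Continuous.tendsto' ?_ _ _ (by simp)
    fun_prop

lemma integral_mul_cexp_neg_mul_Ioi {c : ℂ} (hc : 0 < c.re) :
    IntegrableOn (fun t : ℝ => (t : ℂ) * Complex.exp (-(c * t))) (Set.Ioi 0) ∧
      ∫ t in Set.Ioi (0:ℝ), (t : ℂ) * Complex.exp (-(c * t)) = 1 / c ^ 2 := by
  have hc0 : c ≠ 0 := by
    rintro rfl
    simp at hc
  have hnorm : ∀ t : ℝ, ‖Complex.exp (-(c * t))‖ = Real.exp (-c.re * t) := fun t => by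
    simp [Complex.norm_exp]
  have hint : IntegrableOn (fun t : ℝ => (t : ℂ) * Complex.exp (-(c * t))) (Set.Ioi 0) := by
    refine Integrable.mono' (integrableOn_rpow_mul_exp_neg_mul_rpow (s := 1) (p := 1)
      (by norm_num) one_pos hc) (by fun_prop : Continuous _).aestronglyMeasurable ?_
    filter_upwards [ae_restrict_mem measurableSet_Ioi] with t ht
    rw [norm_mul, hnorm, Complex.norm_real, Real.norm_of_nonneg (le_of_lt ht), rpow_one]
  refine ⟨hint, ?_⟩
  have hderiv : ∀ t ∈ Set.Ici (0:ℝ), HasDerivAt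
      (fun t : ℝ => -(t / c + 1 / c ^ 2) * Complex.exp (-(c * t)))
      ((t : ℂ) * Complex.exp (-(c * t))) t := by
    intro t _
    have h1 : HasDerivAt (fun z : ℂ => -(z / c + 1 / c ^ 2) * Complex.exp (-(c * z)))
        (-(1 / c) * Complex.exp (-(c * t)) +
          -(t / c + 1 / c ^ 2) * (Complex.exp (-(c * t)) * (-(c * 1)))) (t : ℂ) :=
      ((((hasDerivAt_id (t : ℂ)).div_const c).add_const _).neg).mul
        (((hasDerivAt_id (t : ℂ)).const_mul c).neg.cexp)
    convert! h1.comp_ofReal using 1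
    field_simp
    ring
  have hlim : Tendsto (fun t : ℝ => -(t / c + 1 / c ^ 2) * Complex.exp (-(c * t)))
      atTop (nhds 0) := by
    have h0 := tendsto_rpow_mul_exp_neg_mul_atTop_nhds_zero 0 c.re hc
    have h1 := tendsto_rpow_mul_exp_neg_mul_atTop_nhds_zero 1 c.re hc
    have h2 := (h1.const_mul (1 / ‖c‖)).add (h0.const_mul (1 / ‖c‖ ^ 2))
    rw [mul_zero, mul_zero, add_zero] at h2
    refine squeeze_zero_norm' ?_ h2
    filter_upwards [eventually_ge_atTop 0] with t ht
    rw [norm_mul, hnorm, norm_neg, rpow_one, rpow_zero]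
    calc _ ≤ (‖(t : ℂ) / c‖ + ‖1 / c ^ 2‖) * Real.exp (-c.re * t) := by
          gcongr
          exact norm_add_le _ _
      _ = _ := by
          simp only [norm_div, norm_pow, norm_one, Complex.norm_real, Real.norm_of_nonneg ht]
          ring
  rw [integral_Ioi_of_hasDerivAt_of_tendsto' hderiv hint hlim]
  simp

lemma integrable_cexp_neg_mul_cosh {z : ℂ} (hz : 0 < z.re) :
    Integrable fun s : ℝ => Complex.exp (-z * (Real.cosh s : ℂ)) := by
  refine (integrable_exp_neg_mul_sq (b := z.re / 4) (by positivity)).mono'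
    (by fun_prop : Continuous _).aestronglyMeasurable (.of_forall fun s => ?_)
  have hcosh : s ^ 2 / 4 ≤ Real.cosh s := by
    rw [← Real.cosh_abs, ← sq_abs, Real.cosh_eq]
    have := quadratic_le_exp_of_nonneg (abs_nonneg s)
    have := Real.exp_pos (-|s|)
    linarith [abs_nonneg s]
  rw [Complex.norm_exp, Complex.re_mul_ofReal, Complex.neg_re]
  refine Real.exp_le_exp.2 ?_
  nlinarith

lemma integral_cexp_neg_mul_cosh {z : ℂ} (hz : 0 < z.re) :
    ∫ s : ℝ, Complex.exp (-z * (Real.cosh s : ℂ)) = 2 * besselK0C z := by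
  have hint := integrable_cexp_neg_mul_cosh hz
  rw [← intervalIntegral.integral_Iic_add_Ioi hint.integrableOn hint.integrableOn (b := 0)]
  have : ∫ s in Set.Iic (0:ℝ), Complex.exp (-z * (Real.cosh s : ℂ)) = besselK0C z := by
    have := integral_comp_neg_Iic 0 fun s : ℝ => Complex.exp (-z * (Real.cosh s : ℂ))
    simp only [Real.cosh_neg, neg_zero] at this
    exact this
  rw [this, two_mul]
  rfl

lemma integral_inv_mul_cexp_eq_besselK0C {h : ℝ} (hh : 0 < h) {w : ℂ} (hw : 0 < w.re) :
    ∫ t in Set.Ioi (0:ℝ), 1 / (2 * (t : ℂ)) *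
        Complex.exp (-(w * t) - (h : ℂ) ^ 2 * w / (4 * t)) = besselK0C (h * w) := by
  have himg : Set.image (fun s : ℝ => h / 2 * Real.exp s) Set.univ = Set.Ioi 0 := by
    ext t
    simp only [Set.mem_image, Set.mem_univ, true_and, Set.mem_Ioi]
    constructor
    · rintro ⟨s, rfl⟩
      positivity
    · intro ht
      refine ⟨Real.log (2 * t / h), ?_⟩
      rw [Real.exp_log (by positivity)]
      field_simp
  have hz : 0 < ((h : ℂ) * w).re := by
    rw [Complex.re_ofReal_mul]
    positivity
  rw [← himg, integral_image_eq_integral_abs_deriv_smul MeasurableSet.univ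
    (fun s _ => ((Real.hasDerivAt_exp s).const_mul (h / 2)).hasDerivWithinAt)
    (fun s _ t _ hst => Real.exp_injective (mul_left_cancel₀ (by positivity) hst)),
    setIntegral_univ]
  have hpt : ∀ s : ℝ, |h / 2 * Real.exp s| • (1 / (2 * ((h / 2 * Real.exp s : ℝ) : ℂ)) *
      Complex.exp (-(w * (h / 2 * Real.exp s : ℝ)) -
        (h : ℂ) ^ 2 * w / (4 * (h / 2 * Real.exp s : ℝ)))) =
      1 / 2 * Complex.exp (-(h * w) * (Real.cosh s : ℂ)) := by
    intro s
    have h0 : (h : ℂ) ≠ 0 := by exact_mod_cast hh.ne'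
    have hs : (Real.exp s : ℂ) ≠ 0 := by exact_mod_cast (Real.exp_pos s).ne'
    rw [abs_of_pos (by positivity), Complex.real_smul, ← mul_assoc, Real.cosh_eq, Real.exp_neg]
    congr 1
    · push_cast
      push_cast at hs
      field_simp
    · congr 1
      push_cast
      push_cast at hs
      field_simp
      ring
  simp only [hpt]
  rw [integral_const_mul, integral_cexp_neg_mul_cosh hz]
  ring

lemma sq_add_sq_eq_mul {w : ℂ} (hw : w ≠ 0) (u : ℝ) :
    (u : ℂ) ^ 2 + w ^ 2 = w * (w⁻¹ * (u : ℂ) ^ 2 + w) := by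
  field_simp

lemma inv_mul_sq_add_re (w : ℂ) (u : ℝ) :
    (w⁻¹ * (u : ℂ) ^ 2 + w).re = (w⁻¹).re * u ^ 2 + w.re := by
  rw [Complex.add_re, ← Complex.ofReal_pow, Complex.re_mul_ofReal]

lemma inv_re_pos {w : ℂ} (hw : 0 < w.re) : 0 < (w⁻¹).re := by
  have : w ≠ 0 := by
    rintro rfl
    simp at hw
  rw [Complex.inv_re]
  exact div_pos hw (Complex.normSq_pos.2 this)

lemma integrable_sq_div_sq {a d : ℝ} (ha : 0 < a) (hd : 0 < d) :
    Integrable fun u : ℝ => u ^ 2 / (a * u ^ 2 + d) ^ 2 := by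
  have hpos : ∀ u : ℝ, 0 < a * u ^ 2 + d := fun u => by positivity
  refine (integrable_inv_one_add_sq.const_mul (1 / (a * min a d))).mono'
    (Continuous.aestronglyMeasurable ?_) (.of_forall fun u => ?_)
  · exact (by fun_prop : Continuous fun u : ℝ => u ^ 2).div (by fun_prop)
      fun u => (pow_pos (hpos u) 2).ne'
  · have hm : 0 < min a d := lt_min ha hd
    have h1 : min a d * (1 + u ^ 2) ≤ a * u ^ 2 + d := by
      nlinarith [min_le_left a d, min_le_right a d, sq_nonneg u]
    have h2 : u ^ 2 ≤ 1 / a * (a * u ^ 2 + d) := by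
      field_simp
      linarith
    rw [Real.norm_of_nonneg (by positivity)]
    calc u ^ 2 / (a * u ^ 2 + d) ^ 2
        ≤ 1 / a * (a * u ^ 2 + d) / (a * u ^ 2 + d) ^ 2 := by gcongr
      _ = 1 / a * (1 / (a * u ^ 2 + d)) := by
          have := (hpos u).ne'
          field_simp
      _ ≤ 1 / a * (1 / (min a d * (1 + u ^ 2))) := by gcongr
      _ = _ := by
          field_simp

lemma norm_mul_besselJ1_mul_kernel_le {h : ℝ} (hh : 0 < h) {w : ℂ} (hw : 0 < w.re) (u : ℝ) :
    ‖((u * besselJ1 (h * u) / h : ℝ) : ℂ) * (-(2 * u) / ((u : ℂ) ^ 2 + w ^ 2) ^ 2)‖ ≤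
      2 / (h * ‖w‖ ^ 2) * (u ^ 2 / ((w⁻¹).re * u ^ 2 + w.re) ^ 2) := by
  have hw0 : w ≠ 0 := by
    rintro rfl
    simp at hw
  have ha := inv_re_pos hw
  have hD : (w⁻¹).re * u ^ 2 + w.re ≤ ‖w⁻¹ * (u : ℂ) ^ 2 + w‖ := by
    rw [← inv_mul_sq_add_re]
    exact Complex.re_le_norm _
  have hpos : 0 < (w⁻¹).re * u ^ 2 + w.re := by positivity
  have hwn : 0 < ‖w‖ := norm_pos_iff.2 hw0
  rw [sq_add_sq_eq_mul hw0, norm_mul, norm_div, norm_neg, norm_pow, norm_mul, norm_mul,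
    Complex.norm_real, Complex.norm_real, Real.norm_eq_abs, Real.norm_eq_abs, Complex.norm_two]
  calc _ ≤ |u| / h * (2 * |u| / (‖w‖ * ((w⁻¹).re * u ^ 2 + w.re)) ^ 2) := by
        gcongr
        exact abs_mul_besselJ1_mul_le hh u
    _ = 2 / (h * ‖w‖ ^ 2) * (|u| ^ 2 / ((w⁻¹).re * u ^ 2 + w.re) ^ 2) := by
        field_simp
    _ = _ := by rw [sq_abs]

lemma sq_add_sq_ne_zero {w : ℂ} (hw : 0 < w.re) (u : ℝ) : (u : ℂ) ^ 2 + w ^ 2 ≠ 0 := by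
  have hw0 : w ≠ 0 := by
    rintro rfl
    simp at hw
  have ha := inv_re_pos hw
  rw [sq_add_sq_eq_mul hw0]
  refine mul_ne_zero hw0 fun h0 => ?_
  have h1 := inv_mul_sq_add_re w u
  rw [h0, Complex.zero_re] at h1
  have : 0 < (w⁻¹).re * u ^ 2 + w.re := by positivity
  exact this.ne h1

/-- Integration by parts turns the conditionally convergent integral into an absolutely convergent
one. -/
lemma tendsto_integral_mul_besselJ0_div {h : ℝ} (hh : 0 < h) {w : ℂ} (hw : 0 < w.re) :
    Tendsto (fun R : ℝ =>
        ∫ u in (0:ℝ)..R, ((u * besselJ0 (h * u) : ℝ) : ℂ) / ((u : ℂ) ^ 2 + w ^ 2))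
      atTop (nhds (-∫ u in Set.Ioi (0:ℝ), ((u * besselJ1 (h * u) / h : ℝ) : ℂ) *
        (-(2 * u) / ((u : ℂ) ^ 2 + w ^ 2) ^ 2))) := by
  have hw0 : w ≠ 0 := by
    rintro rfl
    simp at hw
  have ha := inv_re_pos hw
  have hwn : 0 < ‖w‖ := norm_pos_iff.2 hw0
  have hne := sq_add_sq_ne_zero hw
  have hcont := continuous_mul_besselJ1_mul h
  have hcont0 : Continuous fun u => besselJ0 (h * u) :=
    continuous_besselJ0.comp (continuous_const.mul continuous_id)
  have hcv' : Continuous fun u : ℝ => -(2 * (u : ℂ)) / ((u : ℂ) ^ 2 + w ^ 2) ^ 2 :=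
    (by fun_prop : Continuous fun u : ℝ => -(2 * (u : ℂ))).div (by fun_prop)
      fun u => pow_ne_zero 2 (hne u)
  have hv : ∀ u : ℝ, HasDerivAt (fun u : ℝ => ((u : ℂ) ^ 2 + w ^ 2)⁻¹)
      (-(2 * u) / ((u : ℂ) ^ 2 + w ^ 2) ^ 2) u := by
    intro u
    have h1 := ((hasDerivAt_pow 2 (u : ℂ)).add_const (w ^ 2)).inv (hne u)
    convert! h1.comp_ofReal using 1
    norm_num
  have hint : IntegrableOn (fun u : ℝ => ((u * besselJ1 (h * u) / h : ℝ) : ℂ) *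
      (-(2 * u) / ((u : ℂ) ^ 2 + w ^ 2) ^ 2)) (Set.Ioi 0) :=
    (((integrable_sq_div_sq ha hw).const_mul _).mono'
      (by fun_prop : Continuous _).aestronglyMeasurable
      (.of_forall (norm_mul_besselJ1_mul_kernel_le hh hw))).integrableOn
  have hparts : ∀ R : ℝ,
      ∫ u in (0:ℝ)..R, ((u * besselJ0 (h * u) : ℝ) : ℂ) / ((u : ℂ) ^ 2 + w ^ 2) =
        ((R * besselJ1 (h * R) / h : ℝ) : ℂ) * ((R : ℂ) ^ 2 + w ^ 2)⁻¹ -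
          ∫ u in (0:ℝ)..R, ((u * besselJ1 (h * u) / h : ℝ) : ℂ) *
            (-(2 * u) / ((u : ℂ) ^ 2 + w ^ 2) ^ 2) := by
    intro R
    have key := intervalIntegral.integral_mul_deriv_eq_deriv_mul (a := 0) (b := R)
      (u := fun u : ℝ => ((u * besselJ1 (h * u) / h : ℝ) : ℂ))
      (u' := fun u : ℝ => ((u * besselJ0 (h * u) : ℝ) : ℂ))
      (fun u _ => (hasDerivAt_mul_besselJ1_mul hh.ne' u).ofReal_comp) (fun u _ => hv u)
      ((by fun_prop : Continuous _).intervalIntegrable _ _) (hcv'.intervalIntegrable _ _)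
    rw [key]
    simp [div_eq_mul_inv]
  have hbdry : Tendsto (fun R : ℝ => ((R * besselJ1 (h * R) / h : ℝ) : ℂ) *
      ((R : ℂ) ^ 2 + w ^ 2)⁻¹) atTop (nhds 0) := by
    have h1 := (tendsto_inv_atTop_zero (𝕜 := ℝ)).const_mul (1 / (h * ‖w‖ * (w⁻¹).re))
    rw [mul_zero] at h1
    refine squeeze_zero_norm' ?_ h1
    filter_upwards [eventually_gt_atTop 0] with R hR
    have hD : (w⁻¹).re * R ^ 2 ≤ ‖w⁻¹ * (R : ℂ) ^ 2 + w‖ := by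
      refine le_trans ?_ (Complex.re_le_norm _)
      rw [inv_mul_sq_add_re]
      linarith
    have h3 := abs_mul_besselJ1_mul_le hh R
    rw [abs_of_pos hR] at h3
    rw [sq_add_sq_eq_mul hw0, norm_mul, norm_inv, norm_mul, Complex.norm_real, Real.norm_eq_abs]
    calc _ ≤ R / h * (‖w‖ * ((w⁻¹).re * R ^ 2))⁻¹ := by gcongr
      _ = _ := by field_simp
  simp only [hparts]
  rw [← zero_sub]
  exact hbdry.sub (intervalIntegral_tendsto_integral_Ioi 0 hint tendsto_id)

lemma neg_integral_mul_besselJ1_kernel_eq_besselK0C {h : ℝ} (hh : 0 < h) {w : ℂ}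
    (hw : 0 < w.re) :
    -∫ u in Set.Ioi (0:ℝ), ((u * besselJ1 (h * u) / h : ℝ) : ℂ) *
        (-(2 * u) / ((u : ℂ) ^ 2 + w ^ 2) ^ 2) = besselK0C (h * w) := by
  have hw0 : w ≠ 0 := by
    rintro rfl
    simp at hw
  have ha := inv_re_pos hw
  have hcont := continuous_mul_besselJ1_mul h
  have hDre : ∀ u : ℝ, 0 < (w⁻¹ * (u : ℂ) ^ 2 + w).re := fun u => by
    rw [inv_mul_sq_add_re]
    positivity
  have hDne : ∀ u : ℝ, w⁻¹ * (u : ℂ) ^ 2 + w ≠ 0 := fun u h0 => by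
    simpa [h0] using hDre u
  set F : ℝ → ℝ → ℂ := fun u t => (((u * besselJ1 (h * u) / h : ℝ) : ℂ) * (2 * u / w ^ 2)) *
    (t * Complex.exp (-((w⁻¹ * (u : ℂ) ^ 2 + w) * t))) with hF
  have hinner : ∀ u : ℝ, ∫ t in Set.Ioi (0:ℝ), F u t =
      -(((u * besselJ1 (h * u) / h : ℝ) : ℂ) * (-(2 * u) / ((u : ℂ) ^ 2 + w ^ 2) ^ 2)) := by
    intro u
    simp only [hF]
    rw [integral_const_mul, (integral_mul_cexp_neg_mul_Ioi (hDre u)).2, sq_add_sq_eq_mul hw0]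
    have := hDne u
    rw [mul_pow]
    field_simp
  have hFnorm : ∀ u t : ℝ, 0 < t → ‖F u t‖ =
      ‖((u * besselJ1 (h * u) / h : ℝ) : ℂ) * (2 * u / w ^ 2)‖ *
        (t * Real.exp (-((w⁻¹).re * u ^ 2 + w.re) * t)) := by
    intro u t ht
    simp only [hF]
    rw [norm_mul _ ((t : ℂ) * _), norm_mul (t : ℂ), Complex.norm_exp, Complex.neg_re,
      Complex.re_mul_ofReal, inv_mul_sq_add_re, Complex.norm_real, Real.norm_of_nonneg ht.le,
      neg_mul]
  have hnorm_int : ∀ u : ℝ, ∫ t in Set.Ioi (0:ℝ), ‖F u t‖ =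
      ‖((u * besselJ1 (h * u) / h : ℝ) : ℂ) * (2 * u / w ^ 2)‖ *
        (1 / ((w⁻¹).re * u ^ 2 + w.re) ^ 2) := by
    intro u
    have hr : 0 < (w⁻¹).re * u ^ 2 + w.re := by positivity
    rw [setIntegral_congr_fun measurableSet_Ioi fun t ht => hFnorm u t ht, integral_const_mul]
    congr 1
    have := (integral_mul_cexp_neg_mul_Ioi
      (c := (((w⁻¹).re * u ^ 2 + w.re : ℝ) : ℂ)) (by rwa [Complex.ofReal_re])).2
    rw [← Complex.ofReal_inj, ← integral_complex_ofReal]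
    push_cast at this ⊢
    rw [← this]
    congr 1
    ext t
    rw [neg_mul]
  have hFcont : Continuous (Function.uncurry F) := by
    have hJ := continuous_besselJ1
    simp only [hF, Function.uncurry_def]
    fun_prop
  have hint : Integrable (Function.uncurry F)
      ((volume.restrict (Set.Ioi (0:ℝ))).prod (volume.restrict (Set.Ioi (0:ℝ)))) := by
    rw [integrable_prod_iff hFcont.aestronglyMeasurable]
    refine ⟨.of_forall fun u => ?_, ?_⟩
    · simp only [Function.uncurry_apply_pair, hF]
      exact (integral_mul_cexp_neg_mul_Ioi (hDre u)).1.const_mul _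
    · simp only [Function.uncurry_apply_pair, hnorm_int]
      refine (((integrable_sq_div_sq ha hw).const_mul (2 / (h * ‖w‖ ^ 2))).mono'
        (Continuous.aestronglyMeasurable ?_) (.of_forall fun u => ?_)).integrableOn
      · have hc : Continuous fun u : ℝ => 1 / ((w⁻¹).re * u ^ 2 + w.re) ^ 2 :=
          continuous_const.div (by fun_prop) fun u => by positivity
        fun_prop
      · rw [Real.norm_of_nonneg (by positivity), norm_mul, norm_div, norm_mul, norm_pow,
          Complex.norm_real, Complex.norm_real, Real.norm_eq_abs, Real.norm_eq_abs,
          Complex.norm_two]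
        calc _ ≤ |u| / h * (2 * |u| / ‖w‖ ^ 2) * (1 / ((w⁻¹).re * u ^ 2 + w.re) ^ 2) := by
              gcongr
              exact abs_mul_besselJ1_mul_le hh u
          _ = 2 / (h * ‖w‖ ^ 2) * (|u| ^ 2 / ((w⁻¹).re * u ^ 2 + w.re) ^ 2) := by
              field_simp
          _ = _ := by rw [sq_abs]
  have houter : ∀ t ∈ Set.Ioi (0:ℝ), ∫ u in Set.Ioi (0:ℝ), F u t =
      1 / (2 * (t : ℂ)) * Complex.exp (-(w * t) - (h : ℂ) ^ 2 * w / (4 * t)) := by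
    intro t ht
    have ht' : 0 < t := ht
    have ht0 : (t : ℂ) ≠ 0 := by exact_mod_cast ht'.ne'
    have hb : 0 < (w⁻¹ * (t : ℂ)).re := by
      rw [Complex.re_mul_ofReal]
      positivity
    have hpt : ∀ u : ℝ, F u t = (2 * t / w ^ 2 * Complex.exp (-(w * t))) *
        (((u * besselJ1 (h * u) / h : ℝ) : ℂ) *
          (u * Complex.exp (-(w⁻¹ * (t : ℂ)) * (u : ℂ) ^ 2))) := by
      intro u
      have : -((w⁻¹ * (u : ℂ) ^ 2 + w) * t) =
          -(w * t) + -(w⁻¹ * (t : ℂ)) * (u : ℂ) ^ 2 := by ring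
      simp only [hF]
      rw [this, Complex.exp_add]
      ring
    simp only [hpt]
    rw [integral_const_mul, integral_mul_besselJ1_mul_cexp_neg_mul_sq hh hb,
      sub_eq_add_neg, Complex.exp_add]
    have : -(h : ℂ) ^ 2 / (4 * (w⁻¹ * t)) = -((h : ℂ) ^ 2 * w / (4 * t)) := by
      field_simp
    rw [this]
    field_simp
    norm_num
  rw [← integral_neg, ← integral_inv_mul_cexp_eq_besselK0C hh hw]
  simp only [← hinner]
  rw [integral_integral_swap hint]
  exact setIntegral_congr_fun measurableSet_Ioi houter

/-- Hankel–Nicholson formula with `ν = 0`, `μ = 0`: for `h > 0` and `Re w > 0`,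
`∫₀^∞ u J₀(hu)/(u² + w²) du = K₀(hw)` as an improper (conditionally convergent)
integral. -/
theorem hankel_nicholson_nu_zero_mu_zero (h : ℝ) (hh : 0 < h)
    (w : ℂ) (hw : 0 < w.re) :
    Tendsto (fun R : ℝ =>
        ∫ u in (0:ℝ)..R, ((u * besselJ0 (h * u) : ℝ) : ℂ) / ((u : ℂ) ^ 2 + w ^ 2))
      atTop (nhds (besselK0C ((h : ℂ) * w))) := by
  rw [← neg_integral_mul_besselJ1_kernel_eq_besselK0C hh hw]
  exact tendsto_integral_mul_besselJ0_div hh hw
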